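/- Fix an integer P ≥ 1 and positive reals μ₁, …, μ_P. For each real t > 0 let Y₁(t), …, Y_{2P}(t) be independent random variables with Y_{2i−1}(t) and Y_{2i}(t) each distributed as Poisson(μ_i t), and define R(t) = 2[ ∑_{i=1}^P Y_{2i−1}(t) log( 2Y_{2i−1}(t) / (Y_{2i−1}(t)+Y_{2i}(t)) ) + ∑_{i=1}^P Y_{2i}(t) log( 2Y_{2i}(t) / (Y_{2i−1}(t)+Y_{2i}(t)) ) ], with the conventions 0·log 0 = 0 and that a pair with Y_{2i−1}(t)+Y_{2i}(t) = 0 contributes 0. Then, as t → ∞, the law of R(t) converges weakly (in distribution) to the chi-squared distribution with P degrees of freedom. (This is the asymptotic null distribution of the likelihood ratio statistic for pairwise equality of Poisson means; t plays the role of the number of realizations M, so the result holds even for a single realization M = 1 as the means grow.) -/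

import Mathlib

open MeasureTheory ProbabilityTheory Filter

/-- The index `2i` (0-based) of the `i`-th pair among `2P` components. -/
def pairL (P : ℕ) (i : Fin P) : Fin (2 * P) := ⟨2 * i.1, by have := i.isLt; omega⟩

/-- The index `2i+1` (0-based) of the `i`-th pair among `2P` components. -/
def pairR (P : ℕ) (i : Fin P) : Fin (2 * P) := ⟨2 * i.1 + 1, by have := i.isLt; omega⟩

/-- The pair index `⌊j/2⌋` of a component `j` among `2P` components. -/
def pairIdx (P : ℕ) (j : Fin (2 * P)) : Fin P := ⟨j.1 / 2, by have := j.isLt; omega⟩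

/-!
For a pair of counts `M`, `N` of common rate `r` put `u = (M - N) / (M + N)`. The statistic of the
pair is `(M + N) * (klFun (1 + u) + klFun (1 - u))`, and `klFun (1 + u) + klFun (1 - u) ∼ u ^ 2` as
`u → 0`. Hence it equals `X ^ 2 * W`, where `X = (M - N) / √(2 * r)` is asymptotically standard
normal by a computation of characteristic functions, and `W` is a function of `(M / r, N / r)` that
is continuous at `(1, 1)` with value `1`. Chebyshev's inequality gives `W → 1` in probability, so by
Slutsky's theorem the statistic of a pair converges in distribution to the square of a standard
normal variable. The pairs are independent, hence the sum converges to a sum of `P` independent such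
squares, and comparing moment generating functions shows that its law is the gamma distribution with
shape `P / 2` and rate `1 / 2`.
-/

open scoped Topology NNReal BoundedContinuousFunction

section GammaDistribution

lemma eq_of_mgf_eventuallyEq {μ ν : Measure ℝ} [IsProbabilityMeasure μ] [IsProbabilityMeasure ν]
    (hμ : 0 ∈ interior (integrableExpSet id μ)) (hν : 0 ∈ interior (integrableExpSet id ν))
    (h : mgf id μ =ᶠ[𝓝 0] mgf id ν) : μ = ν := by
  set s := interior (integrableExpSet id μ) ∩ interior (integrableExpSet id ν)
  have eqOn_strip : Set.EqOn (complexMGF id μ) (complexMGF id ν) {z | z.re ∈ s} := by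
    refine AnalyticOnNhd.eqOn_of_preconnected_of_frequently_eq
      (analyticOnNhd_complexMGF.mono fun z hz => hz.1)
      (analyticOnNhd_complexMGF.mono fun z hz => hz.2)
      ((convex_integrableExpSet.interior.inter convex_integrableExpSet.interior).linear_preimage
        Complex.reLm).isPreconnected (z₀ := 0) ⟨hμ, hν⟩ ?_
    have ofReal_tendsto : Tendsto ((↑) : ℝ → ℂ) (𝓝[≠] 0) (𝓝[≠] 0) :=
      (Complex.continuous_ofReal.tendsto' 0 0 Complex.ofReal_zero).inf
        (by simp)
    refine ofReal_tendsto.frequently (Eventually.frequently ?_)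
    filter_upwards [nhdsWithin_le_nhds h] with t ht
    rw [complexMGF_ofReal, complexMGF_ofReal, ht]
  refine Measure.ext_of_charFun (funext fun t => ?_)
  rw [← complexMGF_id_mul_I, ← complexMGF_id_mul_I]
  exact eqOn_strip (by simpa using ⟨hμ, hν⟩)

lemma gammaPDFReal_mul_exp {a r t : ℝ} (hr : 0 < r) (ht : t < r) (x : ℝ) :
    gammaPDFReal a r x * Real.exp (t * x) = (r / (r - t)) ^ a * gammaPDFReal a (r - t) x := by
  unfold gammaPDFReal
  split_ifs with hx
  · have hrt : 0 < r - t := sub_pos.2 ht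
    have exp_add : Real.exp (-((r - t) * x)) = Real.exp (-(r * x)) * Real.exp (t * x) := by
      rw [← Real.exp_add]; ring_nf
    rw [exp_add, Real.div_rpow hr.le hrt.le]
    have := (Real.rpow_pos_of_pos hrt a).ne'
    field_simp
  · simp

lemma mgf_gammaMeasure {a r t : ℝ} (ha : 0 < a) (hr : 0 < r) (ht : t < r) :
    mgf id (gammaMeasure a r) t = (r / (r - t)) ^ a := by
  have hrt : 0 < r - t := sub_pos.2 ht
  have integral_pdf : ∫ x, gammaPDFReal a (r - t) x = 1 := by
    rw [integral_eq_lintegral_of_nonneg_ae (ae_of_all _ (gammaPDFReal_nonneg ha hrt))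
      (by fun_prop)]
    exact (congrArg ENNReal.toReal (lintegral_gammaPDF_eq_one ha hrt)).trans ENNReal.toReal_one
  calc mgf id (gammaMeasure a r) t
      = ∫ x, gammaPDFReal a r x * Real.exp (t * x) := by
        rw [mgf, gammaMeasure]
        unfold gammaPDF
        rw [integral_withDensity_eq_integral_toReal_smul (by fun_prop) (by simp)]
        simp_rw [ENNReal.toReal_ofReal (gammaPDFReal_nonneg ha hr _), smul_eq_mul, id]
    _ = (r / (r - t)) ^ a * ∫ x, gammaPDFReal a (r - t) x := by
        simp_rw [gammaPDFReal_mul_exp hr ht, integral_const_mul]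
    _ = (r / (r - t)) ^ a := by rw [integral_pdf, mul_one]

lemma zero_mem_interior_integrableExpSet_of_mgf {μ : Measure ℝ} {a r : ℝ} (hr : 0 < r)
    (h : ∀ t < r, mgf id μ t = (r / (r - t)) ^ a) :
    0 ∈ interior (integrableExpSet id μ) := by
  refine mem_interior.2 ⟨Set.Iio r, fun t (ht : t < r) => ?_, isOpen_Iio, hr⟩
  refine not_not.1 fun hint => ?_
  have hpos : 0 < (r / (r - t)) ^ a := Real.rpow_pos_of_pos (div_pos hr (sub_pos.2 ht)) a
  rw [← h t ht, mgf_undef hint] at hpos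
  exact hpos.false

lemma hasLaw_gammaMeasure_of_mgf {Ω : Type*} [MeasurableSpace Ω] {μ : Measure Ω}
    [IsProbabilityMeasure μ] {X : Ω → ℝ} (hX : AEMeasurable X μ) {a r : ℝ} (ha : 0 < a)
    (hr : 0 < r) (h : ∀ t < r, mgf X μ t = (r / (r - t)) ^ a) :
    HasLaw X (gammaMeasure a r) μ where
  aemeasurable := hX
  map_eq := by
    have := isProbabilityMeasure_gammaMeasure ha hr
    have := Measure.isProbabilityMeasure_map hX
    rw [← mgf_id_map hX] at h
    refine eq_of_mgf_eventuallyEq (zero_mem_interior_integrableExpSet_of_mgf hr h)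
      (zero_mem_interior_integrableExpSet_of_mgf hr fun t => mgf_gammaMeasure ha hr) ?_
    filter_upwards [Iio_mem_nhds hr] with t ht
    rw [h t ht, mgf_gammaMeasure ha hr ht]

lemma hasLaw_sum_gammaMeasure {Ω ι : Type*} [MeasurableSpace Ω] {μ : Measure Ω} [Fintype ι]
    [Nonempty ι] {X : ι → Ω → ℝ} {a : ι → ℝ} {r : ℝ} (ha : ∀ i, 0 < a i) (hr : 0 < r)
    (hX : ∀ i, HasLaw (X i) (gammaMeasure (a i) r) μ) (hindep : iIndepFun X μ) :
    HasLaw (∑ i, X i) (gammaMeasure (∑ i, a i) r) μ := by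
  have := hindep.isProbabilityMeasure
  have hmeas i := (hX i).aemeasurable
  refine hasLaw_gammaMeasure_of_mgf (Finset.aemeasurable_sum _ fun i _ => hmeas i)
    (Finset.sum_pos (fun i _ => ha i) Finset.univ_nonempty) hr fun t ht => ?_
  rw [hindep.mgf_sum₀ hmeas, Real.rpow_sum_of_pos (div_pos hr (sub_pos.2 ht))]
  refine Finset.prod_congr rfl fun i _ => ?_
  rw [← mgf_id_map (hmeas i), (hX i).map_eq, mgf_gammaMeasure (ha i) hr ht]

lemma mgf_sq_gaussianReal {v : ℝ≥0} (hv : v ≠ 0) {t : ℝ} (ht : t < 1 / (2 * v)) :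
    mgf (fun x => x ^ 2) (gaussianReal 0 v) t
      = (1 / (2 * v) / (1 / (2 * v) - t)) ^ (1 / 2 : ℝ) := by
  have : (0 : ℝ) < v := by positivity
  have : 0 < 1 / (2 * v) - t := sub_pos.2 ht
  have integrand (x : ℝ) : gaussianPDFReal 0 v x • Real.exp (t * x ^ 2)
      = (√(2 * Real.pi * v))⁻¹ * Real.exp (-(1 / (2 * v) - t) * x ^ 2) := by
    rw [gaussianPDFReal, smul_eq_mul, mul_assoc, ← Real.exp_add]
    ring_nf
  rw [mgf, integral_gaussianReal_eq_integral_smul hv]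
  simp_rw [integrand]
  rw [integral_const_mul, integral_gaussian, ← Real.sqrt_inv,
    ← Real.sqrt_mul (by positivity), Real.sqrt_eq_rpow]
  congr 1
  field_simp

lemma hasLaw_sq_gammaMeasure {Ω : Type*} [MeasurableSpace Ω] {μ : Measure Ω} {X : Ω → ℝ}
    {v : ℝ≥0} (hv : v ≠ 0) (hX : HasLaw X (gaussianReal 0 v) μ) :
    HasLaw (fun ω => X ω ^ 2) (gammaMeasure (1 / 2) (1 / (2 * v))) μ := by
  have := hX.isProbabilityMeasure
  refine hasLaw_gammaMeasure_of_mgf (hX.aemeasurable.pow_const 2) (by norm_num) (by positivity)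
    fun t ht => ?_
  rw [← mgf_sq_gaussianReal hv ht, ← hX.map_eq, mgf_map hX.aemeasurable (by fun_prop)]
  rfl

end GammaDistribution

section TendstoInProbability

variable {T F : Type*} {Ω : T → Type*} {l : Filter T} [∀ t, MeasurableSpace (Ω t)]
  {μ : (t : T) → Measure (Ω t)} [TopologicalSpace F]

/-- Convergence in probability to a constant of random variables which may all be defined on
different probability spaces; Mathlib's `TendstoInMeasure` requires a common one. -/
def TendstoInProbability (Y : (t : T) → Ω t → F) (l : Filter T) (c : F)
    (μ : (t : T) → Measure (Ω t)) : Prop :=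
  ∀ U ∈ 𝓝 c, Tendsto (fun t => μ t {ω | Y t ω ∉ U}) l (𝓝 0)

namespace TendstoInProbability

variable {G : Type*} [TopologicalSpace G] {Y : (t : T) → Ω t → F} {c : F}

lemma comp_continuousAt (hY : TendstoInProbability Y l c μ) {g : F → G} (hg : ContinuousAt g c) :
    TendstoInProbability (fun t ω => g (Y t ω)) l (g c) μ :=
  fun U hU => hY (g ⁻¹' U) (hg hU)

lemma prodMk (hY : TendstoInProbability Y l c μ) {Y' : (t : T) → Ω t → G} {c' : G}
    (hY' : TendstoInProbability Y' l c' μ) :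
    TendstoInProbability (fun t ω => (Y t ω, Y' t ω)) l (c, c') μ := by
  intro U hU
  obtain ⟨V, hV, V', hV', hVU⟩ := mem_nhds_prod_iff.1 hU
  refine tendsto_of_tendsto_of_tendsto_of_le_of_le tendsto_const_nhds
    (by simpa using (hY V hV).add (hY' V' hV')) (fun t => zero_le) fun t => ?_
  refine (measure_mono fun ω hω => ?_).trans (measure_union_le _ _)
  by_contra! hVV'
  simp only [Set.mem_union, Set.mem_ofPred_eq, not_or, not_not] at hVV'
  exact hω (hVU hVV')

end TendstoInProbability

end TendstoInProbability

section ConvergenceInDistribution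

variable {T Ω' E : Type*} {Ω : T → Type*} {l : Filter T} [∀ t, MeasurableSpace (Ω t)]
  [MeasurableSpace Ω'] {μ : (t : T) → Measure (Ω t)} [∀ t, IsProbabilityMeasure (μ t)]
  {μ' : Measure Ω'} [IsProbabilityMeasure μ'] [MeasurableSpace E]

lemma tendstoInDistribution_congr_identDistrib [TopologicalSpace E] [OpensMeasurableSpace E]
    {Ω'' : T → Type*} [∀ t, MeasurableSpace (Ω'' t)] {ν : (t : T) → Measure (Ω'' t)}
    [∀ t, IsProbabilityMeasure (ν t)] {X : (t : T) → Ω t → E} {Y : (t : T) → Ω'' t → E} {Z : Ω' → E}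
    (hXY : ∀ t, IdentDistrib (X t) (Y t) (μ t) (ν t)) (h : TendstoInDistribution X l Z μ μ') :
    TendstoInDistribution Y l Z ν μ' where
  forall_aemeasurable t := (hXY t).aemeasurable_snd
  aemeasurable_limit := h.aemeasurable_limit
  tendsto := h.tendsto.congr fun t => Subtype.ext (hXY t).map_eq

section Levy

variable [NormedAddCommGroup E] [InnerProductSpace ℝ E] [FiniteDimensional ℝ E] [BorelSpace E]

lemma tendsto_iff_tendsto_charFun_of_isCountablyGenerated [l.IsCountablyGenerated]
    {ν : T → ProbabilityMeasure E} {ν₀ : ProbabilityMeasure E} :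
    Tendsto ν l (𝓝 ν₀) ↔ ∀ s : E, Tendsto (fun t => charFun (ν t) s) l (𝓝 (charFun ν₀ s)) := by
  refine ⟨fun h s => ?_, fun h => tendsto_of_seq_tendsto fun u hu =>
    ProbabilityMeasure.tendsto_of_tendsto_charFun fun s => (h s).comp hu⟩
  simp_rw [charFun_eq_integral_innerProbChar]
  exact (ProbabilityMeasure.tendsto_iff_forall_integral_rclike_tendsto ℂ).1 h _

lemma tendstoInDistribution_iff_tendsto_charFun [l.IsCountablyGenerated]
    {X : (t : T) → Ω t → E} {Z : Ω' → E} (hX : ∀ t, AEMeasurable (X t) (μ t))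
    (hZ : AEMeasurable Z μ') :
    TendstoInDistribution X l Z μ μ' ↔
      ∀ s : E, Tendsto (fun t => charFun ((μ t).map (X t)) s) l (𝓝 (charFun (μ'.map Z) s)) :=
  ⟨fun h => tendsto_iff_tendsto_charFun_of_isCountablyGenerated.1 h.tendsto,
    fun h => ⟨hX, hZ, tendsto_iff_tendsto_charFun_of_isCountablyGenerated.2 h⟩⟩

lemma tendstoInDistribution_sum [l.IsCountablyGenerated] {ι : Type*} [Fintype ι]
    {X : ι → (t : T) → Ω t → E} {Z : ι → Ω' → E}
    (hX : ∀ t, iIndepFun (fun k => X k t) (μ t)) (hZ : iIndepFun Z μ')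
    (h : ∀ k, TendstoInDistribution (X k) l (Z k) μ μ') :
    TendstoInDistribution (fun t => ∑ k, X k t) l (∑ k, Z k) μ μ' := by
  have hmeas k t := (h k).forall_aemeasurable t
  have hmeas' k := (h k).aemeasurable_limit
  refine (tendstoInDistribution_iff_tendsto_charFun
    (fun t => Finset.aemeasurable_sum _ fun k _ => hmeas k t)
    (Finset.aemeasurable_sum _ fun k _ => hmeas' k)).2 fun s => ?_
  simp_rw [fun t => (hX t).charFun_map_sum_eq_prod (fun k => hmeas k t),
    hZ.charFun_map_sum_eq_prod hmeas', Finset.prod_apply]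
  exact tendsto_finsetProd _ fun k _ =>
    (tendstoInDistribution_iff_tendsto_charFun (hmeas k) (hmeas' k)).1 (h k) s

end Levy

lemma identDistrib_eval_infinitePi {F : Type*} [MeasurableSpace F] {t : T} {X : Ω t → F}
    (hX : AEMeasurable X (μ t)) :
    IdentDistrib (fun ω => X (ω t)) X (Measure.infinitePi μ) (μ t) :=
  ((measurePreserving_eval_infinitePi μ t).hasLaw.identDistrib .id).comp_of_aemeasurable
    (by rwa [(measurePreserving_eval_infinitePi μ t).map_eq])

lemma tendstoInDistribution_prodMk_of_tendstoInProbability [l.IsCountablyGenerated]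
    [NormedAddCommGroup E] [SecondCountableTopology E] [BorelSpace E] {F : Type*}
    [NormedAddCommGroup F] [MeasurableSpace F] [SecondCountableTopology F] [BorelSpace F]
    {X : (t : T) → Ω t → E} {Z : Ω' → E} {Y : (t : T) → Ω t → F} {c : F}
    (hX : TendstoInDistribution X l Z μ μ') (hY : TendstoInProbability Y l c μ)
    (hY_meas : ∀ t, AEMeasurable (Y t) (μ t)) :
    TendstoInDistribution (fun t ω => (X t ω, Y t ω)) l (fun ω => (Z ω, c)) μ μ' := by
  -- On the product of all the spaces `Ω t`, Slutsky's theorem for a common space applies.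
  have hX_eval t := identDistrib_eval_infinitePi (hX.forall_aemeasurable t)
  have hY_eval t := identDistrib_eval_infinitePi (hY_meas t)
  have hXY_eval t :=
    identDistrib_eval_infinitePi ((hX.forall_aemeasurable t).prodMk (hY_meas t))
  have coupled_Y : TendstoInMeasure (Measure.infinitePi μ)
      (fun t (ω : (t : T) → Ω t) => Y t (ω t)) l (fun _ => c) := fun ε hε =>
    (hY _ (Metric.eball_mem_nhds c hε)).congr fun t => by
      simpa [Set.preimage, Metric.mem_eball] using ((hY_eval t).measure_mem_eq
        (s := (Metric.eball c ε)ᶜ) Metric.isOpen_eball.measurableSet.compl).symm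
  exact tendstoInDistribution_congr_identDistrib hXY_eval <|
    TendstoInDistribution.prodMk_of_tendstoInMeasure_const _ _ _
      (tendstoInDistribution_congr_identDistrib (fun t => (hX_eval t).symm) hX) coupled_Y
      fun t => (hY_eval t).aemeasurable_fst

end ConvergenceInDistribution

section Poisson

lemma hasSum_poisson_natCast_mul {r : ℝ≥0} {f : ℕ → ℝ} {s : ℝ}
    (h : HasSum (fun n : ℕ => Real.exp (-r) * r ^ n / n.factorial * f (n + 1)) s) :
    HasSum (fun n : ℕ => Real.exp (-r) * r ^ n / n.factorial * (n * f n)) (r * s) := by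
  rw [← hasSum_nat_add_iff' 1, Finset.sum_range_one, Nat.cast_zero, zero_mul, mul_zero, sub_zero]
  refine (h.mul_left (r : ℝ)).congr_fun fun n => ?_
  rw [Nat.factorial_succ]
  push_cast
  field_simp
  ring

lemma hasSum_poisson_natCast (r : ℝ≥0) :
    HasSum (fun n : ℕ => Real.exp (-r) * r ^ n / n.factorial * n) r := by
  simpa using hasSum_poisson_natCast_mul (r := r) (f := fun _ => 1) (s := 1)
    (by simpa using hasSum_one_poissonMeasure r)

lemma hasSum_poisson_natCast_sq (r : ℝ≥0) :
    HasSum (fun n : ℕ => Real.exp (-r) * r ^ n / n.factorial * n ^ 2) (r * (r + 1)) := by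
  simp_rw [sq]
  refine hasSum_poisson_natCast_mul (f := fun n => n) ?_
  simpa [mul_add] using (hasSum_poisson_natCast r).add (hasSum_one_poissonMeasure r)

lemma memLp_two_natCast_poissonMeasure (r : ℝ≥0) :
    MemLp (fun n : ℕ => (n : ℝ)) 2 (poissonMeasure r) := by
  rw [memLp_two_iff_integrable_sq .of_discrete, integrable_poissonMeasure_iff]
  simpa using (hasSum_poisson_natCast_sq r).summable

lemma integral_natCast_poissonMeasure (r : ℝ≥0) : ∫ n : ℕ, (n : ℝ) ∂(poissonMeasure r) = r := by
  simpa [integral_poissonMeasure] using (hasSum_poisson_natCast r).tsum_eq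

lemma variance_natCast_poissonMeasure (r : ℝ≥0) :
    Var[fun n : ℕ => (n : ℝ); poissonMeasure r] = r := by
  have integral_sq : ∫ n : ℕ, (n : ℝ) ^ 2 ∂(poissonMeasure r) = r * (r + 1) := by
    simpa [integral_poissonMeasure] using (hasSum_poisson_natCast_sq r).tsum_eq
  rw [variance_eq_sub (memLp_two_natCast_poissonMeasure r), integral_natCast_poissonMeasure]
  simp only [Pi.pow_apply, integral_sq]
  ring

variable {T : Type*} {Ω : T → Type*} {l : Filter T} [∀ t, MeasurableSpace (Ω t)]
  {μ : (t : T) → Measure (Ω t)} {r : T → ℝ≥0} {M N : (t : T) → Ω t → ℕ}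

lemma tendstoInProbability_poisson_div_rate (hr : Tendsto r l atTop)
    (hN : ∀ t, HasLaw (N t) (poissonMeasure (r t)) (μ t)) :
    TendstoInProbability (fun t ω => (N t ω : ℝ) / r t) l 1 μ := by
  intro U hU
  obtain ⟨ε, hε, hεU⟩ := Metric.mem_nhds_iff.1 hU
  have hr' : Tendsto (fun t => (r t : ℝ)) l atTop := NNReal.tendsto_coe_atTop.2 hr
  have chebyshev_bound : Tendsto (fun t => ENNReal.ofReal ((r t : ℝ) / (ε * r t) ^ 2)) l (𝓝 0) := by
    rw [← ENNReal.ofReal_zero, ← mul_zero (ε ^ 2)⁻¹]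
    refine ENNReal.tendsto_ofReal ((hr'.inv_tendsto_atTop.const_mul (ε ^ 2)⁻¹).congr' ?_)
    filter_upwards [hr'.eventually_gt_atTop 0] with t ht
    simp only [Pi.inv_apply]
    field_simp
  refine tendsto_of_tendsto_of_tendsto_of_le_of_le' tendsto_const_nhds chebyshev_bound
    (.of_forall fun t => zero_le) ?_
  filter_upwards [hr'.eventually_gt_atTop 0] with t ht
  calc μ t {ω | (N t ω : ℝ) / r t ∉ U}
      = poissonMeasure (r t) {n | (n : ℝ) / r t ∉ U} :=
        (hN t).measure_eq (p := fun n => (n : ℝ) / r t ∉ U) .of_discrete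
    _ ≤ poissonMeasure (r t) {n | ε * r t ≤ |(n : ℝ) - r t|} := by
        refine measure_mono fun n hn => ?_
        have : ε ≤ |(n : ℝ) / r t - 1| := not_lt.1 fun h => hn (hεU h)
        rwa [div_sub_one ht.ne', abs_div, abs_of_pos ht, le_div_iff₀ ht] at this
    _ ≤ ENNReal.ofReal ((r t : ℝ) / (ε * r t) ^ 2) := by
        simpa [integral_natCast_poissonMeasure, variance_natCast_poissonMeasure] using
          meas_ge_le_variance_div_sq (memLp_two_natCast_poissonMeasure (r t)) (mul_pos hε ht)

lemma tendsto_mul_cos_div_sqrt_sub_one (s : ℝ) :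
    Tendsto (fun m : ℝ => m * (Real.cos (s / √m) - 1)) atTop (𝓝 (-s ^ 2 / 2)) := by
  have sqrt_mul_sin :
      Tendsto (fun m : ℝ => √m * Real.sin ((√m)⁻¹ * (s / 2))) atTop (𝓝 (s / 2)) := by
    simpa [Function.comp_def] using
      ((Real.hasDerivAt_sin 0).hasFDerivAt.lim_real (s / 2)).comp Real.tendsto_sqrt_atTop
  have limit := (sqrt_mul_sin.pow 2).const_mul (-2)
  rw [show -2 * (s / 2) ^ 2 = -s ^ 2 / 2 by ring] at limit
  refine limit.congr' ?_
  filter_upwards [eventually_ge_atTop 0] with m hm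
  have half_angle : s / √m = 2 * ((√m)⁻¹ * (s / 2)) := by ring
  rw [half_angle, Real.cos_two_mul, Real.cos_sq', mul_pow, Real.sq_sqrt hm]
  ring

lemma charFun_map_poisson_sub {Ω : Type*} [MeasurableSpace Ω] {μ : Measure Ω} {M N : Ω → ℕ}
    {r : ℝ≥0} (hM : HasLaw M (poissonMeasure r) μ) (hN : HasLaw N (poissonMeasure r) μ)
    (hMN : IndepFun M N μ) (s : ℝ) :
    charFun (μ.map fun ω => (M ω : ℝ) - N ω) s = Real.exp (2 * r * (Real.cos s - 1)) := by
  have := hM.isProbabilityMeasure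
  have cast_map {X : Ω → ℕ} (hX : HasLaw X (poissonMeasure r) μ) (u : ℝ) :
      charFun (μ.map fun ω => (X ω : ℝ)) u =
        Complex.exp (r * (Complex.exp (u * Complex.I) - 1)) := by
    rw [← charFun_map_cast_poissonMeasure, ← hX.map_eq,
      AEMeasurable.map_map_of_aemeasurable .of_discrete hX.aemeasurable]
    rfl
  have cast_meas {X : Ω → ℕ} (hX : HasLaw X (poissonMeasure r) μ) :
      AEMeasurable (fun ω => (X ω : ℝ)) μ :=
    measurable_from_nat.comp_aemeasurable hX.aemeasurable
  have indep : IndepFun (fun ω => (M ω : ℝ)) (fun ω => -1 * (N ω : ℝ)) μ :=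
    hMN.comp measurable_from_nat (ψ := fun n : ℕ => -1 * (n : ℝ)) measurable_from_nat
  calc charFun (μ.map fun ω => (M ω : ℝ) - N ω) s
      = charFun (μ.map fun ω => (M ω : ℝ)) s * charFun (μ.map fun ω => (N ω : ℝ)) (-1 * s) := by
        rw [← charFun_map_mul_comp (cast_meas hN), ← Pi.mul_apply,
          ← indep.charFun_map_fun_add_eq_mul (cast_meas hM) ((cast_meas hN).const_mul _)]
        simp only [neg_one_mul, sub_eq_add_neg]
    _ = Real.exp (2 * r * (Real.cos s - 1)) := by
        rw [cast_map hM, cast_map hN, ← Complex.exp_add]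
        push_cast
        rw [Complex.cos]
        ring_nf

lemma tendstoInDistribution_poisson_sub_div_sqrt [l.IsCountablyGenerated]
    [∀ t, IsProbabilityMeasure (μ t)] {Ω' : Type*} [MeasurableSpace Ω'] {μ' : Measure Ω'}
    [IsProbabilityMeasure μ'] {Z : Ω' → ℝ} (hr : Tendsto r l atTop)
    (hM : ∀ t, HasLaw (M t) (poissonMeasure (r t)) (μ t))
    (hN : ∀ t, HasLaw (N t) (poissonMeasure (r t)) (μ t)) (hMN : ∀ t, IndepFun (M t) (N t) (μ t))
    (hZ : HasLaw Z (gaussianReal 0 1) μ') :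
    TendstoInDistribution (fun t ω => ((M t ω : ℝ) - N t ω) / √(2 * r t)) l Z μ μ' := by
  have sub_meas t : AEMeasurable (fun ω => (M t ω : ℝ) - N t ω) (μ t) :=
    (measurable_from_nat.comp_aemeasurable (hM t).aemeasurable).sub
      (measurable_from_nat.comp_aemeasurable (hN t).aemeasurable)
  refine (tendstoInDistribution_iff_tendsto_charFun (fun t => (sub_meas t).div_const _)
    hZ.aemeasurable).2 fun s => ?_
  have charFun_limit : charFun (μ'.map Z) s = (Real.exp (-s ^ 2 / 2) : ℝ) := by
    rw! [hZ.map_eq, charFun_gaussianReal]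
    simp [neg_div]
  have charFun_eq t : charFun ((μ t).map fun ω => ((M t ω : ℝ) - N t ω) / √(2 * r t)) s
      = (Real.exp (2 * r t * (Real.cos (s / √(2 * r t)) - 1)) : ℝ) := by
    simp_rw [div_eq_inv_mul]
    rw [charFun_map_mul_comp (sub_meas t), charFun_map_poisson_sub (hM t) (hN t) (hMN t)]
  simp_rw [charFun_limit, charFun_eq]
  have two_rate : Tendsto (fun t => 2 * (r t : ℝ)) l atTop :=
    (NNReal.tendsto_coe_atTop.2 hr).const_mul_atTop two_pos
  exact (Complex.continuous_ofReal.tendsto _).comp <| (Real.continuous_exp.tendsto _).comp <|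
    (tendsto_mul_cos_div_sqrt_sub_one s).comp two_rate

end Poisson

section PairStatistic

open InformationTheory

/-- The likelihood ratio statistic for the equality of the means of two Poisson variables with
observed counts `m` and `n`. Since `x / 0 = 0` and `Real.log 0 = 0`, vanishing counts contribute
nothing to it. -/
noncomputable def poissonPairStatistic (m n : ℕ) : ℝ :=
  2 * (m * Real.log (2 * m / (m + n)) + n * Real.log (2 * n / (m + n)))

/-- The ratio of the symmetrized Kullback-Leibler function `klFun (1 + u) + klFun (1 - u)` to its
second-order Taylor polynomial `u ^ 2`, extended by continuity at `u = 0`. -/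
noncomputable def klSymmRatio : ℝ → ℝ :=
  Function.update (fun u => (klFun (1 + u) + klFun (1 - u)) / u ^ 2) 0 1

lemma klSymmRatio_zero : klSymmRatio 0 = 1 := Function.update_self ..

lemma sq_mul_klSymmRatio (u : ℝ) : u ^ 2 * klSymmRatio u = klFun (1 + u) + klFun (1 - u) := by
  rcases eq_or_ne u 0 with rfl | hu
  · simp [klFun_one]
  · rw [klSymmRatio, Function.update_of_ne hu, mul_div_cancel₀ _ (pow_ne_zero 2 hu)]

lemma continuousAt_klSymmRatio_zero : ContinuousAt klSymmRatio 0 := by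
  refine continuousAt_update_same.2 ?_
  have deriv_klFun_add : ∀ᶠ u : ℝ in 𝓝 0, HasDerivAt (fun u => klFun (1 + u) + klFun (1 - u))
      (Real.log (1 + u) - Real.log (1 - u)) u := by
    filter_upwards [Ioo_mem_nhds neg_one_lt_zero zero_lt_one] with u hu
    exact (((hasDerivAt_klFun (by linarith [hu.1])).comp_const_add 1 u).add
      ((hasDerivAt_klFun (by linarith [hu.2])).comp_const_sub 1 u)).congr_deriv
        (sub_eq_add_neg _ _).symm
  have deriv_sq (u : ℝ) : HasDerivAt (fun u => u ^ 2) (2 * u) u := by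
    simpa using hasDerivAt_pow 2 u
  have deriv_log : HasDerivAt (fun u => Real.log (1 + u) - Real.log (1 - u)) 2 0 := by
    have h := ((Real.hasDerivAt_log (x := 1 + 0) (by simp)).comp_const_add 1 0).sub
      ((Real.hasDerivAt_log (x := 1 - 0) (by simp)).comp_const_sub 1 0)
    norm_num at h
    exact h
  have deriv_ratio :
      Tendsto (fun u => (Real.log (1 + u) - Real.log (1 - u)) / (2 * u)) (𝓝[≠] 0) (𝓝 1) := by
    have h := (hasDerivAt_iff_tendsto_slope_zero.1 deriv_log).const_mul (1 / 2)
    norm_num at h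
    refine h.congr fun u => ?_
    ring
  refine HasDerivAt.lhopital_zero_nhdsNE (nhdsWithin_le_nhds deriv_klFun_add)
    (.of_forall deriv_sq) ?_ ?_ ?_ deriv_ratio
  · filter_upwards [self_mem_nhdsWithin] with u hu using mul_ne_zero two_ne_zero hu
  · exact (deriv_klFun_add.self_of_nhds.continuousAt.tendsto.mono_left nhdsWithin_le_nhds).trans
      (by simp [klFun_one])
  · exact ((deriv_sq 0).continuousAt.tendsto.mono_left nhdsWithin_le_nhds).trans (by simp)

lemma poissonPairStatistic_eq_klFun (m n : ℕ) :
    poissonPairStatistic m n = (m + n) *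
      (klFun (1 + ((m : ℝ) - n) / (m + n)) + klFun (1 - ((m : ℝ) - n) / (m + n))) := by
  rcases Nat.eq_zero_or_pos (m + n) with h | h
  · obtain ⟨rfl, rfl⟩ := Nat.add_eq_zero_iff.1 h
    simp [poissonPairStatistic]
  · have hmn : (0 : ℝ) < m + n := mod_cast h
    have one_add : 1 + ((m : ℝ) - n) / (m + n) = 2 * m / (m + n) := by field_simp; ring
    have one_sub : 1 - ((m : ℝ) - n) / (m + n) = 2 * n / (m + n) := by field_simp; ring
    rw [one_add, one_sub, poissonPairStatistic, klFun, klFun]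
    field_simp
    ring

/-- The quotient of `poissonPairStatistic m n` by its quadratic approximation
`(m - n) ^ 2 / (2 * r)`, as a function of `(m / r, n / r)`. -/
noncomputable def quadraticApproxRatio (p : ℝ × ℝ) : ℝ :=
  2 / (p.1 + p.2) * klSymmRatio ((p.1 - p.2) / (p.1 + p.2))

lemma quadraticApproxRatio_one_one : quadraticApproxRatio (1, 1) = 1 := by
  norm_num [quadraticApproxRatio, klSymmRatio_zero]

lemma continuousAt_quadraticApproxRatio : ContinuousAt quadraticApproxRatio (1, 1) := by
  have add_ne : ((1, 1) : ℝ × ℝ).1 + ((1, 1) : ℝ × ℝ).2 ≠ 0 := by norm_num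
  refine ContinuousAt.mul (by fun_prop (disch := exact add_ne)) ?_
  refine ContinuousAt.comp' (g := klSymmRatio) ?_ (by fun_prop (disch := exact add_ne))
  simpa using continuousAt_klSymmRatio_zero

lemma poissonPairStatistic_eq_sq_mul {r : ℝ} (hr : 0 < r) (m n : ℕ) :
    poissonPairStatistic m n =
      ((m - n) / √(2 * r)) ^ 2 * quadraticApproxRatio (m / r, n / r) := by
  have ratio_scale : ((m : ℝ) / r - n / r) / (m / r + n / r) = (m - n) / (m + n) := by
    rw [← sub_div, ← add_div, div_div_div_cancel_right₀ hr.ne']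
  rw [poissonPairStatistic_eq_klFun, ← sq_mul_klSymmRatio, quadraticApproxRatio, ratio_scale,
    div_pow _ √(2 * r), Real.sq_sqrt (by positivity)]
  rcases eq_or_ne ((m : ℝ) + n) 0 with h | h
  · have hm : m = 0 := by norm_cast at h; omega
    have hn : n = 0 := by norm_cast at h; omega
    simp [hm, hn]
  · field_simp

variable {T : Type*} {Ω : T → Type*} {l : Filter T} [∀ t, MeasurableSpace (Ω t)]
  {μ : (t : T) → Measure (Ω t)} [∀ t, IsProbabilityMeasure (μ t)]
  {Ω' : Type*} [MeasurableSpace Ω'] {μ' : Measure Ω'} [IsProbabilityMeasure μ']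

lemma tendstoInDistribution_poissonPairStatistic [l.IsCountablyGenerated] {r : T → ℝ≥0}
    {M N : (t : T) → Ω t → ℕ} {Z : Ω' → ℝ} (hr : Tendsto r l atTop)
    (hM : ∀ t, HasLaw (M t) (poissonMeasure (r t)) (μ t))
    (hN : ∀ t, HasLaw (N t) (poissonMeasure (r t)) (μ t)) (hMN : ∀ t, IndepFun (M t) (N t) (μ t))
    (hZ : HasLaw Z (gaussianReal 0 1) μ') :
    TendstoInDistribution (fun t ω => poissonPairStatistic (M t ω) (N t ω)) l
      (fun ω => Z ω ^ 2) μ μ' := by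
  have function_aemeasurable (g : ℕ × ℕ → ℝ) t : AEMeasurable (fun ω => g (M t ω, N t ω)) (μ t) :=
    Measurable.of_discrete.comp_aemeasurable ((hM t).aemeasurable.prodMk (hN t).aemeasurable)
  have ratio_tendsto : TendstoInProbability
      (fun t ω => quadraticApproxRatio ((M t ω : ℝ) / r t, (N t ω : ℝ) / r t)) l 1 μ := by
    rw [← quadraticApproxRatio_one_one]
    exact ((tendstoInProbability_poisson_div_rate hr hM).prodMk
      (tendstoInProbability_poisson_div_rate hr hN)).comp_continuousAt
      continuousAt_quadraticApproxRatio
  have product_tendsto := (tendstoInDistribution_prodMk_of_tendstoInProbability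
    (tendstoInDistribution_poisson_sub_div_sqrt hr hM hN hMN hZ) ratio_tendsto
    fun t => function_aemeasurable
      (fun p => quadraticApproxRatio ((p.1 : ℝ) / r t, (p.2 : ℝ) / r t)) t).continuous_comp
    (show Continuous fun p : ℝ × ℝ => p.1 ^ 2 * p.2 by fun_prop)
  have limit_eq : (fun ω => Z ω ^ 2) = (fun p : ℝ × ℝ => p.1 ^ 2 * p.2) ∘ fun ω => (Z ω, 1) := by
    ext; simp
  rw [limit_eq]
  refine ⟨function_aemeasurable fun p => poissonPairStatistic p.1 p.2,
    product_tendsto.aemeasurable_limit, product_tendsto.tendsto.congr' ?_⟩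
  filter_upwards [hr.eventually_gt_atTop 0] with t ht
  refine Subtype.ext (congrArg ((μ t).map ·) (funext fun ω => ?_))
  exact (poissonPairStatistic_eq_sq_mul (NNReal.coe_pos.2 ht) _ _).symm

end PairStatistic

section SumOfPairStatistics

lemma iIndepFun_curry {Ω ι : Type*} [MeasurableSpace Ω] {μ : Measure Ω} {κ : ι → Type*}
    {𝓧 : (i : ι) → κ i → Type*} [∀ i j, MeasurableSpace (𝓧 i j)]
    {X : (i : ι) → (j : κ i) → Ω → 𝓧 i j} (hX : ∀ i j, Measurable (X i j))
    (h : iIndepFun (fun p : (i : ι) × κ i => X p.1 p.2) μ) :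
    iIndepFun (fun i ω j => X i j ω) μ := by
  have := h.isProbabilityMeasure
  have : ∀ i j, IsProbabilityMeasure (μ.map (X i j)) := fun i j =>
    Measure.isProbabilityMeasure_map (hX i j).aemeasurable
  have block_law (i : ι) :
      μ.map (fun ω j => X i j ω) = Measure.infinitePi fun j => μ.map (X i j) :=
    (iIndepFun_iff_map_fun_eq_infinitePi_map (hX i)).1
      (h.precomp (g := Sigma.mk i) sigma_mk_injective)
  rw [iIndepFun_iff_map_fun_eq_infinitePi_map (by fun_prop)]
  simp_rw [block_law]
  rw [← Measure.infinitePi_map_piCurry fun i j => μ.map (X i j),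
    ← (iIndepFun_iff_map_fun_eq_infinitePi_map (by fun_prop)).1 h,
    Measure.map_map (by fun_prop) (by fun_prop)]
  rfl

lemma hasLaw_sum_sq_gammaMeasure {ι : Type*} [Fintype ι] [Nonempty ι] :
    HasLaw (∑ k : ι, fun x : ι → ℝ => x k ^ 2) (gammaMeasure (Fintype.card ι / 2) (1 / 2))
      (Measure.pi fun _ => gaussianReal 0 1) := by
  have sq_law (k : ι) : HasLaw (fun x : ι → ℝ => x k ^ 2) (gammaMeasure (1 / 2) (1 / 2))
      (Measure.pi fun _ => gaussianReal 0 1) := by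
    simpa using hasLaw_sq_gammaMeasure one_ne_zero
      (measurePreserving_eval (fun _ : ι => gaussianReal 0 1) k).hasLaw
  have indep : iIndepFun (fun (k : ι) (x : ι → ℝ) => x k ^ 2)
      (Measure.pi fun _ => gaussianReal 0 1) :=
    iIndepFun_pi (X := fun (_ : ι) (x : ℝ) => x ^ 2) fun _ => by fun_prop
  simpa [div_eq_mul_inv] using
    hasLaw_sum_gammaMeasure (fun _ => one_half_pos) one_half_pos sq_law indep

theorem tendstoInDistribution_sum_poissonPairStatistic {T ι : Type*} [Fintype ι] [Nonempty ι]
    {Ω : T → Type*} {l : Filter T} [l.IsCountablyGenerated] [∀ t, MeasurableSpace (Ω t)]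
    {μ : (t : T) → Measure (Ω t)} [∀ t, IsProbabilityMeasure (μ t)] {Ω' : Type*}
    [MeasurableSpace Ω'] {μ' : Measure Ω'} [IsProbabilityMeasure μ'] {r : ι → T → ℝ≥0}
    {M N : ι → (t : T) → Ω t → ℕ} {Z : Ω' → ℝ} (hr : ∀ k, Tendsto (r k) l atTop)
    (hM : ∀ k t, HasLaw (M k t) (poissonMeasure (r k t)) (μ t))
    (hN : ∀ k t, HasLaw (N k t) (poissonMeasure (r k t)) (μ t))
    (hMN : ∀ k t, IndepFun (M k t) (N k t) (μ t))
    (hpairs : ∀ t, iIndepFun (fun k ω => (M k t ω, N k t ω)) (μ t))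
    (hZ : HasLaw Z (gammaMeasure (Fintype.card ι / 2) (1 / 2)) μ') :
    TendstoInDistribution (fun t => ∑ k, fun ω => poissonPairStatistic (M k t ω) (N k t ω)) l Z
      μ μ' := by
  have statistic_tendsto (k : ι) := tendstoInDistribution_poissonPairStatistic (hr k) (hM k) (hN k)
    (hMN k) (measurePreserving_eval (fun _ : ι => gaussianReal 0 1) k).hasLaw
  have statistic_indep t :
      iIndepFun (fun k ω => poissonPairStatistic (M k t ω) (N k t ω)) (μ t) :=
    (hpairs t).comp (fun _ p => poissonPairStatistic p.1 p.2) fun _ => .of_discrete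
  have sum_tendsto := tendstoInDistribution_sum statistic_indep
    (iIndepFun_pi (X := fun (_ : ι) (x : ℝ) => x ^ 2) fun _ => by fun_prop) statistic_tendsto
  refine ⟨sum_tendsto.forall_aemeasurable, hZ.aemeasurable, ?_⟩
  simpa only [hZ.map_eq, hasLaw_sum_sq_gammaMeasure.map_eq] using sum_tendsto.tendsto

end SumOfPairStatistics

section Pairs

variable {P : ℕ}

lemma pairIdx_pairL (i : Fin P) : pairIdx P (pairL P i) = i := by
  ext; simp [pairIdx, pairL]

lemma pairIdx_pairR (i : Fin P) : pairIdx P (pairR P i) = i := by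
  ext; simp only [pairIdx, pairR]; omega

lemma pairL_ne_pairR (i j : Fin P) : pairL P i ≠ pairR P j := by
  simp only [pairL, pairR, ne_eq, Fin.mk.injEq]; omega

lemma injective_cond_pairR_pairL :
    Function.Injective fun p : (_ : Fin P) × Bool => cond p.2 (pairR P p.1) (pairL P p.1) := by
  rintro ⟨i, a⟩ ⟨j, b⟩ h
  obtain rfl : i = j := by
    have := congrArg (pairIdx P) h
    cases a <;> cases b <;> simpa [pairIdx_pairL, pairIdx_pairR] using this
  cases a <;> cases b <;> simp_all [pairL_ne_pairR, (pairL_ne_pairR _ _).symm]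

lemma iIndepFun_pairs {Ω 𝓧 : Type*} [MeasurableSpace Ω] [MeasurableSpace 𝓧] {μ : Measure Ω}
    {X : Fin (2 * P) → Ω → 𝓧} (hX : ∀ j, Measurable (X j)) (h : iIndepFun X μ) :
    iIndepFun (fun i ω => (X (pairL P i) ω, X (pairR P i) ω)) μ := by
  have blocks := iIndepFun_curry (κ := fun _ => Bool)
    (X := fun i b => X (cond b (pairR P i) (pairL P i))) (fun i b => hX _)
    (h.precomp injective_cond_pairR_pairL)
  exact blocks.comp (fun _ x => (x false, x true)) fun _ => by fun_prop

end Pairs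

theorem lrt_pairwise_statistic_tendsto_chiSq_general {T : Type*} {l : Filter T}
    [l.IsCountablyGenerated] {P : ℕ} (hP : 1 ≤ P) {r : Fin P → T → ℝ≥0}
    (hr : ∀ i, Tendsto (r i) l atTop) (f : ℝ →ᵇ ℝ) :
    Tendsto (fun t => ∫ x, f x ∂((Measure.pi fun j => poissonMeasure (r (pairIdx P j) t)).map
      fun y => ∑ i, poissonPairStatistic (y (pairL P i)) (y (pairR P i)))) l
      (𝓝 (∫ x, f x ∂gammaMeasure (P / 2) (1 / 2))) := by
  have : Nonempty (Fin P) := ⟨⟨0, hP⟩⟩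
  have := isProbabilityMeasure_gammaMeasure (a := P / 2) (by positivity) one_half_pos
  have coordinate_law (j : Fin (2 * P)) (t : T) := (measurePreserving_eval
    (fun j => poissonMeasure (r (pairIdx P j) t)) j).hasLaw
  have coordinate_indep (t : T) : iIndepFun (fun j (y : Fin (2 * P) → ℕ) => y j)
      (Measure.pi fun j => poissonMeasure (r (pairIdx P j) t)) :=
    iIndepFun_pi (X := fun _ => id) fun _ => aemeasurable_id
  have statistic_tendsto := tendstoInDistribution_sum_poissonPairStatistic hr
    (fun i t => by simpa only [pairIdx_pairL] using coordinate_law (pairL P i) t)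
    (fun i t => by simpa only [pairIdx_pairR] using coordinate_law (pairR P i) t)
    (fun i t => (coordinate_indep t).indepFun (pairL_ne_pairR i i))
    (fun t => iIndepFun_pairs measurable_pi_apply (coordinate_indep t))
    (by rw [Fintype.card_fin]; exact .id (μ := gammaMeasure (P / 2) (1 / 2)))
  simpa [Finset.sum_fn] using
    ProbabilityMeasure.tendsto_iff_forall_integral_tendsto.1 statistic_tendsto.tendsto f

/-- Asymptotic null distribution of the likelihood ratio statistic for pairwise equality
of Poisson means: if `Y_{2i−1}(t), Y_{2i}(t)`, `1 ≤ i ≤ P`, are independent with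
`Y_{2i−1}(t), Y_{2i}(t) ~ Poisson(μᵢ t)`, and
`R(t) = 2[∑ᵢ Y_{2i−1}(t) log(2Y_{2i−1}(t)/(Y_{2i−1}(t)+Y_{2i}(t))) + ∑ᵢ Y_{2i}(t) log(2Y_{2i}(t)/(Y_{2i−1}(t)+Y_{2i}(t)))]`
(a pair with `Y_{2i−1}(t)+Y_{2i}(t) = 0` contributing `0`, and `0·log 0 = 0`), then as
`t → ∞` the law of `R(t)` converges weakly to the chi-squared distribution with `P`
degrees of freedom, i.e. the gamma distribution with shape `P/2` and rate `1/2`. Weak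
convergence is expressed via integrals of bounded continuous test functions. -/
theorem lrt_pairwise_statistic_tendsto_chiSq
    (P : ℕ) (hP : 1 ≤ P)
    (μ : Fin P → NNReal) (hμ : ∀ i, 0 < μ i)
    (ρ : (Fin (2 * P) → ℕ) → ℝ)
    (hρ : ∀ y : Fin (2 * P) → ℕ, ρ y =
      2 * ∑ i : Fin P,
        (if y (pairL P i) + y (pairR P i) = 0 then 0
         else
          (y (pairL P i) : ℝ) *
              Real.log (2 * (y (pairL P i) : ℝ) / ((y (pairL P i) : ℝ) + (y (pairR P i) : ℝ))) +
            (y (pairR P i) : ℝ) *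
              Real.log (2 * (y (pairR P i) : ℝ) / ((y (pairL P i) : ℝ) + (y (pairR P i) : ℝ)))))
    (law : NNReal → Measure ℝ)
    (hlaw : ∀ t : NNReal, law t =
      Measure.map ρ (Measure.pi fun j : Fin (2 * P) => poissonMeasure (μ (pairIdx P j) * t)))
    (chiSq : Measure ℝ)
    (hchi : chiSq = gammaMeasure ((P : ℝ) / 2) (1 / 2)) :
    ∀ f : BoundedContinuousFunction ℝ ℝ,
      Tendsto (fun t : NNReal => ∫ x, f x ∂(law t)) atTop (nhds (∫ x, f x ∂chiSq)) := by
  have hρ_eq : ρ = fun y => ∑ i, poissonPairStatistic (y (pairL P i)) (y (pairR P i)) := by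
    funext y
    rw [hρ, Finset.mul_sum]
    refine Finset.sum_congr rfl fun i _ => ?_
    split_ifs with h
    · simp [poissonPairStatistic, Nat.add_eq_zero_iff.1 h]
    · rfl
  simp_rw [hlaw, hchi, hρ_eq]
  have hr (i : Fin P) : Tendsto (fun t => μ i * t) atTop atTop := tendsto_id.const_mul_atTop (hμ i)
  exact lrt_pairwise_statistic_tendsto_chiSq_general hP (r := fun i t => μ i * t) hr
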